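/- Let ν > 0, ε ∈ (0,1/2), T > 0, and suppose |w(t)| ≤ M and ℓ(t) ≤ L for all t ∈ [0,T], and that the energy-dissipation balance E(t) + A(t) + ∫_{ℓ₀}^{ℓ(t)} κ(σ)dσ + W(t) = E(0) holds for all t ≥ 0. Set μ⁰ := L/π, μ¹ := ν(L/π)², and m := ½·min{ 1/(2μ⁰), ν/2, 1/(μ⁰+μ¹) } > 0. Then there exists a constant C > 0, depending only on T, L, M, ν and ℓ₀ (in particular independent of ε), such that for every t ∈ [0,T]: Ẽ(t) ≤ 4·Ẽ(0)·e^{−m t/ε} + C·∫₀ᵗ ( ℓ'(τ) + ẇ(τ)² + u_x(τ,0)² + 1 )·e^{−m(t−τ)/ε} dτ, where Ẽ(t) := ½∫₀^{ℓ(t)}( ε²u_t(t,σ)² + (u_x(t,σ) − r_x(t,σ))² )dσ. -/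

import Mathlib

/-!
Put `v = u - r`, which vanishes at both ends of `(0, ℓ(t))`, and consider the Lyapunov functional
`F = Ẽ + 2mε ∫ u_t v dx` with `m` the rate `mconst ν L` (`lyap`).

* By Young and Poincaré, `2/5 Ẽ ≤ F ≤ 8/5 Ẽ` (`lyap_sandwich`). A Poincaré inequality with constant
  `(l/3)²` instead of the optimal `(l/π)²` suffices (`poincare`); the choice of `m` leaves enough
  room.
* Since `∫ u_x = -w`, one has `Ẽ = E - w²/(2ℓ)`. The energy balance together with `κ > 0` and the
  monotonicity of `ℓ` says that `E + A + W` is nonincreasing, so that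
  `E' ≤ -(ν/ε) ∫ ε²u_t² - ẇ u_x(·,0)` wherever `ℓ` is differentiable (`dissipation`).
* Differentiating the cross term and testing the wave equation against `v` (`virial`) produces
  `-(2m/ε) ∫ v_x²` together with terms controlled by the friction; the contribution of `r_t` is
  `O(1 + ẇ² + ℓ')` because `εℓ' ≤ 1` makes `ε ℓ'²` linear in `ℓ'` (`rt_bound`). Altogether
  `F' + (m/ε) F ≤ C (ℓ' + ẇ² + u_x(·,0)² + 1)` for almost every time (`lyap_decay`).
* Every constituent of `F` is a `C¹` function of `(t, ℓ(t))` with `ℓ` Lipschitz, so `e^{mt/ε} F` is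
  absolutely continuous (`ac_lyap`) and the differential inequality can be integrated
  (`decay_global`). The factor `4` is the ratio `(8/5)/(2/5)`.

These steps are carried out for a displacement that is `C²` on the whole plane. A smooth cutoff equal
to `1` near the closure of the moving domain and to `0` near the complement of the neighbourhood where
`u` is `C²` reduces the theorem to that case (`exists_global_extension`), since all quantities involved
depend only on the germ of `u` along the closed domain.
-/

open MeasureTheory Set

/-- Partial derivative in time. -/
noncomputable def pt (u : ℝ → ℝ → ℝ) (t x : ℝ) : ℝ := deriv (fun s => u s x) t

/-- Partial derivative in space. -/
noncomputable def px (u : ℝ → ℝ → ℝ) (t x : ℝ) : ℝ := deriv (fun y => u t y) x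

/-- Second partial derivative in time. -/
noncomputable def ptt (u : ℝ → ℝ → ℝ) (t x : ℝ) : ℝ := deriv (fun s => pt u s x) t

/-- Second partial derivative in space. -/
noncomputable def pxx (u : ℝ → ℝ → ℝ) (t x : ℝ) : ℝ := deriv (fun y => px u t y) x

/-- Kinetic plus potential energy `E(t)`. -/
noncomputable def En (ε : ℝ) (ℓ : ℝ → ℝ) (u : ℝ → ℝ → ℝ) (t : ℝ) : ℝ :=
  (1/2) * ∫ σ in (0:ℝ)..ℓ t, (ε ^ 2 * (pt u t σ) ^ 2 + (px u t σ) ^ 2)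

/-- Energy dissipated by friction `A(t)`. -/
noncomputable def Afr (ε ν : ℝ) (ℓ : ℝ → ℝ) (u : ℝ → ℝ → ℝ) (t : ℝ) : ℝ :=
  ν * ∫ τ in (0:ℝ)..t, ∫ σ in (0:ℝ)..ℓ τ, ε * (pt u τ σ) ^ 2

/-- Work of the external loading `W(t)` (with `ẇ(τ) = u_t(τ,0)`). -/
noncomputable def Wk (u : ℝ → ℝ → ℝ) (t : ℝ) : ℝ :=
  ∫ τ in (0:ℝ)..t, pt u τ 0 * px u τ 0

/-- The modified energy `Ẽ(t) = ½∫₀^{ℓ(t)} (ε²u_t² + (u_x − r_x)²)`, where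
`r(t,x) = w(t)(1 − x/ℓ(t))`, so `r_x(t,x) = −w(t)/ℓ(t)` with `w(t) = u(t,0)`. -/
noncomputable def Emod (ε : ℝ) (ℓ : ℝ → ℝ) (u : ℝ → ℝ → ℝ) (t : ℝ) : ℝ :=
  (1/2) * ∫ σ in (0:ℝ)..ℓ t,
    (ε ^ 2 * (pt u t σ) ^ 2 + (px u t σ + u t 0 / ℓ t) ^ 2)

/-- The decay rate `m = ½ min{ 1/(2μ⁰), ν/2, 1/(μ⁰+μ¹) }`, where `μ⁰ = L/π` and
`μ¹ = ν(L/π)²`. -/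
noncomputable def mconst (ν L : ℝ) : ℝ :=
  (1/2) * min (min (1 / (2 * (L / Real.pi))) (ν / 2))
    (1 / (L / Real.pi + ν * (L / Real.pi) ^ 2))

/-! ### Partial derivatives and the moving-domain Leibniz rule -/

lemma hasDerivAt_pt {g : ℝ → ℝ → ℝ} (hg : ContDiff ℝ 1 (fun p : ℝ × ℝ => g p.1 p.2)) (t x : ℝ) :
    HasDerivAt (fun s => g s x) (pt g t x) t := by
  have h : Differentiable ℝ (fun s => g s x) :=
    (hg.comp (contDiff_id.prodMk contDiff_const : ContDiff ℝ 1 (fun s : ℝ => (s, x)))).differentiable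
      one_ne_zero
  exact (h t).hasDerivAt

lemma hasDerivAt_px {g : ℝ → ℝ → ℝ} (hg : ContDiff ℝ 1 (fun p : ℝ × ℝ => g p.1 p.2)) (t x : ℝ) :
    HasDerivAt (fun y => g t y) (px g t x) x := by
  have h : Differentiable ℝ (fun y => g t y) :=
    (hg.comp (contDiff_const.prodMk contDiff_id : ContDiff ℝ 1 (fun s : ℝ => (t, s)))).differentiable
      one_ne_zero
  exact (h x).hasDerivAt

lemma contDiff_pt {g : ℝ → ℝ → ℝ} {n k : WithTop ℕ∞} (hnk : n + 1 ≤ k)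
    (hg : ContDiff ℝ k (fun p : ℝ × ℝ => g p.1 p.2)) :
    ContDiff ℝ n (fun p : ℝ × ℝ => pt g p.1 p.2) := by
  have h1 : ContDiff ℝ 1 (fun p : ℝ × ℝ => g p.1 p.2) := hg.of_le (le_trans le_add_self hnk)
  have h : (fun p : ℝ × ℝ => pt g p.1 p.2)
      = fun p => fderiv ℝ (fun p : ℝ × ℝ => g p.1 p.2) p (1, 0) := by
    funext p
    have := ((h1.differentiable one_ne_zero p).hasFDerivAt).comp_hasDerivAt_of_eq p.1
      ((hasDerivAt_id p.1).prodMk (hasDerivAt_const p.1 p.2)) rfl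
    exact (hasDerivAt_pt h1 p.1 p.2).unique this
  rw [h]
  exact (hg.fderiv_right hnk).clm_apply contDiff_const

lemma contDiff_px {g : ℝ → ℝ → ℝ} {n k : WithTop ℕ∞} (hnk : n + 1 ≤ k)
    (hg : ContDiff ℝ k (fun p : ℝ × ℝ => g p.1 p.2)) :
    ContDiff ℝ n (fun p : ℝ × ℝ => px g p.1 p.2) := by
  have h1 : ContDiff ℝ 1 (fun p : ℝ × ℝ => g p.1 p.2) := hg.of_le (le_trans le_add_self hnk)
  have h : (fun p : ℝ × ℝ => px g p.1 p.2)
      = fun p => fderiv ℝ (fun p : ℝ × ℝ => g p.1 p.2) p (0, 1) := by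
    funext p
    have := ((h1.differentiable one_ne_zero p).hasFDerivAt).comp_hasDerivAt_of_eq p.2
      ((hasDerivAt_const p.2 p.1).prodMk (hasDerivAt_id p.2)) rfl
    exact (hasDerivAt_px h1 p.1 p.2).unique this
  rw [h]
  exact (hg.fderiv_right hnk).clm_apply contDiff_const

lemma continuous_slice {g : ℝ → ℝ → ℝ} (hg : Continuous (fun p : ℝ × ℝ => g p.1 p.2)) (t : ℝ) :
    Continuous (g t) :=
  hg.comp (continuous_const.prodMk continuous_id)

/-- The primitive `Φ(t,y) = ∫₀^y g(t,x) dx` of a `C¹` function, as a function of both variables. -/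
lemma hasFDerivAt_primitive {g : ℝ → ℝ → ℝ} (hg : ContDiff ℝ 1 (fun p : ℝ × ℝ => g p.1 p.2))
    (p : ℝ × ℝ) :
    HasFDerivAt (fun p : ℝ × ℝ => ∫ x in (0:ℝ)..p.2, g p.1 x)
      ((ContinuousLinearMap.toSpanSingleton ℝ (∫ x in (0:ℝ)..p.2, pt g p.1 x)).coprod
        (ContinuousLinearMap.toSpanSingleton ℝ (g p.1 p.2))) p := by
  have hc : Continuous (fun p : ℝ × ℝ => g p.1 p.2) := hg.continuous
  have hptc : Continuous (fun p : ℝ × ℝ => pt g p.1 p.2) := (contDiff_pt (n := 0) (by simp) hg).continuous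
  have key : ∀ t y : ℝ, HasDerivAt (fun s => ∫ x in (0:ℝ)..y, g s x)
      (∫ x in (0:ℝ)..y, pt g t x) t := by
    intro t y
    have hK : IsCompact (Icc (t - 1) (t + 1) ×ˢ uIcc 0 y) := isCompact_Icc.prod isCompact_uIcc
    obtain ⟨B, hB⟩ := hK.exists_bound_of_continuousOn hptc.continuousOn
    refine (intervalIntegral.hasDerivAt_integral_of_dominated_loc_of_deriv_le
      (F := g) (F' := fun s x => pt g s x) (bound := fun _ => B)
      (Icc_mem_nhds (by linarith : t - 1 < t) (by linarith : t < t + 1)) ?_ ?_ ?_ ?_ ?_ ?_).2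
    · exact Filter.Eventually.of_forall fun s => (continuous_slice hc s).aestronglyMeasurable
    · exact (continuous_slice hc t).intervalIntegrable _ _
    · exact (continuous_slice hptc t).aestronglyMeasurable
    · exact Filter.Eventually.of_forall fun x hx s hs => hB (s, x) ⟨hs, uIoc_subset_uIcc hx⟩
    · exact intervalIntegrable_const
    · exact Filter.Eventually.of_forall fun x _ s _ => hasDerivAt_pt hg s x
  refine (hasStrictFDerivAt_uncurry_coprod (u := p) (f := fun t y => ∫ x in (0:ℝ)..y, g t x)
    (f₁ := fun t y => ContinuousLinearMap.toSpanSingleton ℝ (∫ x in (0:ℝ)..y, pt g t x))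
    (f₂ := fun t y => ContinuousLinearMap.toSpanSingleton ℝ (g t y)) ?_ ?_ ?_ ?_).hasFDerivAt
  · exact Filter.Eventually.of_forall fun v => (key v.1 v.2).hasFDerivAt
  · refine Filter.Eventually.of_forall fun v => ?_
    exact (intervalIntegral.integral_hasDerivAt_right
      ((continuous_slice hc v.1).intervalIntegrable _ _)
      ((continuous_slice hc v.1).stronglyMeasurableAtFilter _ _)
      (continuous_slice hc v.1).continuousAt).hasFDerivAt
  · exact ((ContinuousLinearMap.toSpanSingletonCLE (𝕜 := ℝ) (E := ℝ)).continuous.comp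
      (intervalIntegral.continuous_parametric_primitive_of_continuous
        (f := fun t x => pt g t x) hptc)).continuousAt
  · exact ((ContinuousLinearMap.toSpanSingletonCLE (𝕜 := ℝ) (E := ℝ)).continuous.comp hc).continuousAt

lemma contDiff_primitive {g : ℝ → ℝ → ℝ} (hg : ContDiff ℝ 1 (fun p : ℝ × ℝ => g p.1 p.2)) :
    ContDiff ℝ 1 (fun p : ℝ × ℝ => ∫ x in (0:ℝ)..p.2, g p.1 x) := by
  have hptc : Continuous (fun p : ℝ × ℝ => pt g p.1 p.2) := (contDiff_pt (n := 0) (by simp) hg).continuous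
  rw [contDiff_one_iff_hasFDerivAt]
  refine ⟨_, ?_, hasFDerivAt_primitive hg⟩
  have h1 := (ContinuousLinearMap.toSpanSingletonCLE (𝕜 := ℝ) (E := ℝ)).continuous.comp
      (intervalIntegral.continuous_parametric_primitive_of_continuous
        (f := fun t x => pt g t x) (a₀ := 0) (μ := volume) hptc)
  have h2 := (ContinuousLinearMap.toSpanSingletonCLE (𝕜 := ℝ) (E := ℝ)).continuous.comp hg.continuous
  exact (ContinuousLinearMap.coprodEquivL (𝕜 := ℝ) (E := ℝ) (F := ℝ) (G := ℝ) ℝ).continuous.comp (h1.prodMk h2)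

/-- Leibniz rule on `(0, ℓ(t))`. -/
lemma hasDerivAt_moving {g : ℝ → ℝ → ℝ} (hg : ContDiff ℝ 1 (fun p : ℝ × ℝ => g p.1 p.2))
    {ℓ : ℝ → ℝ} {t d : ℝ} (hℓ : HasDerivAt ℓ d t) :
    HasDerivAt (fun s => ∫ x in (0:ℝ)..ℓ s, g s x)
      ((∫ x in (0:ℝ)..ℓ t, pt g t x) + g t (ℓ t) * d) t := by
  have := (hasFDerivAt_primitive hg (t, ℓ t)).comp_hasDerivAt_of_eq t
    ((hasDerivAt_id t).prodMk hℓ) rfl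
  refine this.congr_deriv ?_
  simp [mul_comm]

/-- A `C¹` function of `(t, ℓ(t))` with `ℓ` Lipschitz is absolutely continuous. -/
lemma ac_comp {f : ℝ × ℝ → ℝ} {ℓ : ℝ → ℝ} {T l0 L : ℝ} {K : NNReal}
    (hf : ContDiffOn ℝ 1 f (Icc 0 T ×ˢ Icc l0 L)) (hT : 0 ≤ T)
    (hℓ : LipschitzOnWith K ℓ (Icc 0 T)) (hmap : ∀ t ∈ Icc 0 T, ℓ t ∈ Icc l0 L) :
    AbsolutelyContinuousOnInterval (fun t => f (t, ℓ t)) 0 T := by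
  obtain ⟨K', hK'⟩ := hf.exists_lipschitzOnWith one_ne_zero
    ((convex_Icc 0 T).prod (convex_Icc l0 L)) (isCompact_Icc.prod isCompact_Icc)
  have h2 : LipschitzOnWith (max 1 K) (fun t => (t, ℓ t)) (Icc 0 T) :=
    (LipschitzWith.id.lipschitzOnWith).prodMk hℓ
  have := hK'.comp h2 (fun t ht => ⟨ht, hmap t ht⟩)
  rw [← uIcc_of_le hT] at this
  exact this.absolutelyContinuousOnInterval

lemma ac_moving {g : ℝ → ℝ → ℝ} (hg : ContDiff ℝ 1 (fun p : ℝ × ℝ => g p.1 p.2))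
    {ℓ : ℝ → ℝ} {T l0 L : ℝ} {K : NNReal} (hT : 0 ≤ T)
    (hℓ : LipschitzOnWith K ℓ (Icc 0 T)) (hmap : ∀ t ∈ Icc 0 T, ℓ t ∈ Icc l0 L) :
    AbsolutelyContinuousOnInterval (fun t => ∫ x in (0:ℝ)..ℓ t, g t x) 0 T :=
  ac_comp (f := fun p : ℝ × ℝ => ∫ x in (0:ℝ)..p.2, g p.1 x)
    (contDiff_primitive hg).contDiffOn hT hℓ hmap

/-! ### Integral inequalities in space -/

/-- A Poincaré inequality on `(0,l)` with a constant slightly worse than the optimal `(l/π)²`.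
The identity `g' + g² = -k²` for `g = -k tan(k(x - l/2))`, with `k = 3/l < π/l` so that `g` is
smooth on `[0,l]`, turns `∫ (v' - g v)² ≥ 0` into `∫ v'² ≥ k² ∫ v²`. -/
lemma poincare {l : ℝ} (hl : 0 < l) {v v' : ℝ → ℝ} (hv : ∀ x, HasDerivAt v (v' x) x)
    (hv' : Continuous v') (h0 : v 0 = 0) (h1 : v l = 0) :
    ∫ x in (0:ℝ)..l, v x ^ 2 ≤ (l / 3) ^ 2 * ∫ x in (0:ℝ)..l, v' x ^ 2 := by
  set k : ℝ := 3 / l with hk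
  have hkl : k * l = 3 := by rw [hk]; field_simp
  have hkp : 0 < k := by positivity
  have hvc : Continuous v := continuous_iff_continuousAt.2 fun x => (hv x).continuousAt
  have hcos : ∀ x ∈ uIcc 0 l, Real.cos (k * (x - l / 2)) ≠ 0 := by
    intro x hx
    rw [uIcc_of_le hl.le] at hx
    apply ne_of_gt
    apply Real.cos_pos_of_mem_Ioo
    have := Real.pi_gt_three
    constructor <;> nlinarith [hx.1, hx.2]
  set g : ℝ → ℝ := fun x => -k * Real.tan (k * (x - l / 2)) with hg
  have hgd : ∀ x ∈ uIcc 0 l, HasDerivAt g (-k ^ 2 - g x ^ 2) x := by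
    intro x hx
    have h := (Real.hasDerivAt_tan (hcos x hx)).comp x
      (((hasDerivAt_id x).sub_const (l / 2)).const_mul k)
    have h' := h.const_mul (-k)
    refine h'.congr_deriv ?_
    simp only [hg]
    rw [Real.tan_eq_sin_div_cos]
    have hc := hcos x hx
    have h3 := Real.sin_sq_add_cos_sq (k * (x - l / 2))
    generalize k * (x - l / 2) = y at hc h3 ⊢
    field_simp
    linear_combination h3
  have hgc : ContinuousOn g (uIcc 0 l) := fun x hx => (hgd x hx).continuousAt.continuousWithinAt
  have hD : ∀ x ∈ uIcc 0 l, HasDerivAt (fun x => g x * v x ^ 2)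
      ((-k ^ 2 - g x ^ 2) * v x ^ 2 + g x * (2 * v x * v' x)) x := by
    intro x hx
    refine ((hgd x hx).mul ((hv x).pow 2)).congr_deriv ?_
    simp
  have hi : IntervalIntegrable
      (fun x => (-k ^ 2 - g x ^ 2) * v x ^ 2 + g x * (2 * v x * v' x)) volume 0 l := by
    apply ContinuousOn.intervalIntegrable
    fun_prop
  have hz := intervalIntegral.integral_eq_sub_of_hasDerivAt hD hi
  rw [h0, h1] at hz
  have hmono : ∫ x in (0:ℝ)..l, ((-k ^ 2 - g x ^ 2) * v x ^ 2 + g x * (2 * v x * v' x))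
      ≤ ∫ x in (0:ℝ)..l, (v' x ^ 2 - k ^ 2 * v x ^ 2) := by
    apply intervalIntegral.integral_mono_on hl.le hi
    · exact Continuous.intervalIntegrable (by fun_prop) _ _
    · intro x _
      nlinarith [sq_nonneg (v' x - g x * v x)]
  rw [hz, intervalIntegral.integral_sub (Continuous.intervalIntegrable (by fun_prop) _ _)
    (Continuous.intervalIntegrable (by fun_prop) _ _), intervalIntegral.integral_const_mul] at hmono
  have hlk : l / 3 * k = 1 := by linarith
  nlinarith [sq_nonneg (l / 3), mul_le_mul_of_nonneg_left hmono (sq_nonneg (l / 3)),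
    show (l / 3) ^ 2 * (k ^ 2 * ∫ x in (0:ℝ)..l, v x ^ 2) = ∫ x in (0:ℝ)..l, v x ^ 2 by
      rw [← mul_assoc, ← mul_pow, hlk]; ring]

/-- Young's inequality for integrals. -/
lemma young_integral {l θ : ℝ} (hl : 0 ≤ l) (hθ : 0 < θ) {p q : ℝ → ℝ} (hp : Continuous p)
    (hq : Continuous q) :
    |∫ x in (0:ℝ)..l, p x * q x|
      ≤ θ / 2 * (∫ x in (0:ℝ)..l, p x ^ 2) + 1 / (2 * θ) * ∫ x in (0:ℝ)..l, q x ^ 2 := by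
  rw [← intervalIntegral.integral_const_mul, ← intervalIntegral.integral_const_mul,
    ← intervalIntegral.integral_add (Continuous.intervalIntegrable (by fun_prop) _ _)
    (Continuous.intervalIntegrable (by fun_prop) _ _)]
  refine (intervalIntegral.abs_integral_le_integral_abs hl).trans ?_
  apply intervalIntegral.integral_mono_on hl (Continuous.intervalIntegrable (by fun_prop) _ _)
    (Continuous.intervalIntegrable (by fun_prop) _ _)
  intro x _
  have : θ / 2 * p x ^ 2 + 1 / (2 * θ) * q x ^ 2 - |p x| * |q x|
      = (θ * |p x| - |q x|) ^ 2 / (2 * θ) := by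
    field_simp
    rw [← sq_abs (p x), ← sq_abs (q x)]
    ring
  rw [abs_mul]
  have h2 : 0 ≤ (θ * |p x| - |q x|) ^ 2 / (2 * θ) := by positivity
  linarith

/-! ### The Lyapunov functional -/

/-- The four properties of the decay rate that are used, phrased with the Poincaré constant `L/3` in
place of `L/π`; the slack is `π/12 ≤ 3/10` and `π²/18 ≤ 11/20`. -/
lemma mconst_facts {ν L : ℝ} (hν : 0 < ν) (hL : 0 < L) :
    0 < mconst ν L ∧ 4 * mconst ν L ≤ ν ∧ mconst ν L * (L / 3) ≤ 3 / 10 ∧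
      mconst ν L * (L / 3) ^ 2 * ν ≤ 11 / 20 := by
  have hpi := Real.pi_pos
  have hpi2 : Real.pi < 3.1416 := Real.pi_lt_d4
  set q : ℝ := L / Real.pi with hq
  have hqp : 0 < q := by positivity
  have hL3 : L / 3 = q * (Real.pi / 3) := by rw [hq]; field_simp
  have hm0 : 0 < mconst ν L := by
    unfold mconst
    rw [← hq]
    have : 0 < min (min (1 / (2 * q)) (ν / 2)) (1 / (q + ν * q ^ 2)) :=
      lt_min (lt_min (by positivity) (by positivity)) (by positivity)
    linarith
  have h1 : mconst ν L ≤ 1 / 2 * (1 / (2 * q)) := by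
    unfold mconst
    exact mul_le_mul_of_nonneg_left ((min_le_left _ _).trans (min_le_left _ _)) (by norm_num)
  have h2 : mconst ν L ≤ 1 / 2 * (ν / 2) := by
    unfold mconst
    exact mul_le_mul_of_nonneg_left ((min_le_left _ _).trans (min_le_right _ _)) (by norm_num)
  have h3 : mconst ν L ≤ 1 / 2 * (1 / (q + ν * q ^ 2)) := by
    unfold mconst
    exact mul_le_mul_of_nonneg_left (min_le_right _ _) (by norm_num)
  set m := mconst ν L
  have h1' : m * q ≤ 1 / 4 := by
    have := mul_le_mul_of_nonneg_right h1 hqp.le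
    have h : 1 / 2 * (1 / (2 * q)) * q = 1 / 4 := by field_simp; norm_num
    linarith
  have h3' : m * (q + ν * q ^ 2) ≤ 1 / 2 := by
    have hp : 0 < q + ν * q ^ 2 := by positivity
    have := mul_le_mul_of_nonneg_right h3 hp.le
    have h : 1 / 2 * (1 / (q + ν * q ^ 2)) * (q + ν * q ^ 2) = 1 / 2 := by field_simp
    linarith
  refine ⟨hm0, by linarith, ?_, ?_⟩
  · rw [hL3]
    have : 0 < m * q := by positivity
    nlinarith
  · rw [hL3]
    have h5 : m * q ^ 2 * ν ≤ 1 / 2 := by nlinarith [mul_pos hm0 hqp]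
    have h6 : 0 < m * q ^ 2 * ν := by positivity
    have h7 : Real.pi ^ 2 ≤ 9.9 := by nlinarith
    have : m * (q * (Real.pi / 3)) ^ 2 * ν = m * q ^ 2 * ν * Real.pi ^ 2 / 9 := by ring
    rw [this]
    nlinarith [h6, sq_nonneg Real.pi]

/-- `Ẽ = E - w²/(2ℓ)`, because `∫ u_x = -w`. This form is differentiable at every point where `ℓ`
and `E` are. -/
lemma Emod_eq {u : ℝ → ℝ → ℝ} (hu : ContDiff ℝ 2 (fun p : ℝ × ℝ => u p.1 p.2)) {ℓ : ℝ → ℝ}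
    {ε t : ℝ} (hl : 0 < ℓ t) (hbc : u t (ℓ t) = 0) :
    Emod ε ℓ u t = En ε ℓ u t - u t 0 ^ 2 / (2 * ℓ t) := by
  have ha := continuous_slice (contDiff_pt (n := 1) (by norm_num) hu).continuous t
  have hb := continuous_slice (contDiff_px (n := 1) (by norm_num) hu).continuous t
  have hint : ∫ x in (0:ℝ)..ℓ t, px u t x = - u t 0 := by
    rw [intervalIntegral.integral_eq_sub_of_hasDerivAt
      (fun x _ => hasDerivAt_px (hu.of_le (by norm_num)) t x) (hb.intervalIntegrable _ _), hbc]
    ring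
  have h : ∫ σ in (0:ℝ)..ℓ t, (ε ^ 2 * (pt u t σ) ^ 2 + (px u t σ + u t 0 / ℓ t) ^ 2)
      = (∫ σ in (0:ℝ)..ℓ t, (ε ^ 2 * (pt u t σ) ^ 2 + (px u t σ) ^ 2))
        + ∫ σ in (0:ℝ)..ℓ t, (2 * (u t 0 / ℓ t) * px u t σ + (u t 0 / ℓ t) ^ 2) := by
    rw [← intervalIntegral.integral_add (Continuous.intervalIntegrable (by fun_prop) _ _)
      (Continuous.intervalIntegrable (by fun_prop) _ _)]
    congr 1
    funext σ
    ring
  have h2 : ∫ σ in (0:ℝ)..ℓ t, (2 * (u t 0 / ℓ t) * px u t σ + (u t 0 / ℓ t) ^ 2)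
      = 2 * (u t 0 / ℓ t) * (- u t 0) + ℓ t * (u t 0 / ℓ t) ^ 2 := by
    rw [intervalIntegral.integral_add (Continuous.intervalIntegrable (by fun_prop) _ _)
      (Continuous.intervalIntegrable (by fun_prop) _ _), intervalIntegral.integral_const_mul, hint,
      intervalIntegral.integral_const, smul_eq_mul, sub_zero]
  unfold Emod En
  rw [h, h2]
  field_simp
  ring

/-- The equation tested against `v = u - r`. Both boundary terms vanish, and since `r_x` does not
depend on `x` while `∫ v_x = 0`, one has `∫ u_x v_x = ∫ v_x²`. -/
lemma virial {u : ℝ → ℝ → ℝ} (hu : ContDiff ℝ 2 (fun p : ℝ × ℝ => u p.1 p.2)) {ε ν t l : ℝ}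
    (hl : 0 < l) (hbc : u t l = 0)
    (hpde : ∀ x, 0 < x → x < l → ε ^ 2 * ptt u t x - pxx u t x + ν * ε * pt u t x = 0) :
    ε ^ 2 * ∫ x in (0:ℝ)..l, pt (pt u) t x * (u t x - u t 0 * (1 - x / l))
      = - (∫ x in (0:ℝ)..l, (px u t x + u t 0 / l) ^ 2)
        - ν * ∫ x in (0:ℝ)..l, (ε * pt u t x) * (u t x - u t 0 * (1 - x / l)) := by
  have hu1 : ContDiff ℝ 1 (fun p : ℝ × ℝ => u p.1 p.2) := hu.of_le (by norm_num)
  have hpt := contDiff_pt (n := 1) (by norm_num) hu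
  have hpx := contDiff_px (n := 1) (by norm_num) hu
  have ha := continuous_slice hpt.continuous t
  have hb := continuous_slice hpx.continuous t
  have hus := continuous_slice hu.continuous t
  have hat := continuous_slice (contDiff_pt (n := 0) (by simp) hpt).continuous t
  have hbx := continuous_slice (contDiff_px (n := 0) (by simp) hpx).continuous t
  have hv : ∀ x, HasDerivAt (fun x => u t x - u t 0 * (1 - x / l)) (px u t x + u t 0 / l) x := by
    intro x
    refine ((hasDerivAt_px hu1 t x).sub
      ((((hasDerivAt_id x).div_const l).const_sub 1).const_mul (u t 0))).congr_deriv ?_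
    ring
  have hibp := intervalIntegral.integral_mul_deriv_eq_deriv_mul (a := 0) (b := l)
    (u := fun x => u t x - u t 0 * (1 - x / l)) (u' := fun x => px u t x + u t 0 / l)
    (v := fun x => px u t x + u t 0 / l) (v' := fun x => px (px u) t x)
    (fun x _ => hv x) (fun x _ => (hasDerivAt_px hpx t x).add_const _)
    (Continuous.intervalIntegrable (by fun_prop) _ _)
    (Continuous.intervalIntegrable (by fun_prop) _ _)
  have e1 : u t l - u t 0 * (1 - l / l) = 0 := by rw [hbc, div_self hl.ne']; ring
  have e0 : u t 0 - u t 0 * (1 - 0 / l) = 0 := by ring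
  rw [e1, e0] at hibp
  have h1 : ∫ x in (0:ℝ)..l, (px u t x + u t 0 / l) ^ 2
      = - ∫ x in (0:ℝ)..l, (u t x - u t 0 * (1 - x / l)) * px (px u) t x := by
    rw [hibp]
    simp only [zero_mul, sub_zero, zero_sub, neg_neg]
    congr 1
    funext x
    ring
  rw [h1, neg_neg, ← intervalIntegral.integral_const_mul, ← intervalIntegral.integral_const_mul,
    ← intervalIntegral.integral_sub (Continuous.intervalIntegrable (by fun_prop) _ _)
      (Continuous.intervalIntegrable (by fun_prop) _ _)]
  apply intervalIntegral.integral_congr_ae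
  have hne : ∀ᵐ x ∂(volume : Measure ℝ), x ≠ l := by simp [ae_iff]
  filter_upwards [hne] with x hxl hx
  rw [uIoc_of_le hl.le] at hx
  have h := hpde x hx.1 (lt_of_le_of_ne hx.2 hxl)
  have heq : ε ^ 2 * pt (pt u) t x - px (px u) t x + ν * ε * pt u t x = 0 := h
  linear_combination (u t x - u t 0 * (1 - x / l)) * heq

/-- The cross term `∫₀^{ℓ(t)} u_t (u - r) dx`. -/
noncomputable def cross (ℓ : ℝ → ℝ) (u : ℝ → ℝ → ℝ) (t : ℝ) : ℝ :=
  ∫ x in (0:ℝ)..ℓ t, pt u t x * (u t x - u t 0 * (1 - x / ℓ t))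

/-- Splitting `cross` into moving-domain integrals whose integrands do not involve `ℓ`. -/
lemma cross_eq {u : ℝ → ℝ → ℝ} (hu : ContDiff ℝ 2 (fun p : ℝ × ℝ => u p.1 p.2)) (ℓ : ℝ → ℝ)
    (t : ℝ) :
    cross ℓ u t = (∫ x in (0:ℝ)..ℓ t, pt u t x * u t x)
      - u t 0 * (∫ x in (0:ℝ)..ℓ t, pt u t x)
      + u t 0 * (ℓ t)⁻¹ * ∫ x in (0:ℝ)..ℓ t, x * pt u t x := by
  have ha := continuous_slice (contDiff_pt (n := 1) (by norm_num) hu).continuous t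
  have hus := continuous_slice hu.continuous t
  unfold cross
  rw [← intervalIntegral.integral_const_mul, ← intervalIntegral.integral_const_mul,
    ← intervalIntegral.integral_sub (Continuous.intervalIntegrable (by fun_prop) _ _)
      (Continuous.intervalIntegrable (by fun_prop) _ _),
    ← intervalIntegral.integral_add (Continuous.intervalIntegrable (by fun_prop) _ _)
      (Continuous.intervalIntegrable (by fun_prop) _ _)]
  congr 1
  funext x
  ring

lemma contDiff_pt_mul_self {u : ℝ → ℝ → ℝ} (hu : ContDiff ℝ 2 (fun p : ℝ × ℝ => u p.1 p.2)) :
    ContDiff ℝ 1 (fun p : ℝ × ℝ => (fun t x => pt u t x * u t x) p.1 p.2) :=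
  (contDiff_pt (n := 1) (by norm_num) hu).mul (hu.of_le (by norm_num))

lemma contDiff_mul_pt {u : ℝ → ℝ → ℝ} (hu : ContDiff ℝ 2 (fun p : ℝ × ℝ => u p.1 p.2)) :
    ContDiff ℝ 1 (fun p : ℝ × ℝ => (fun t x => x * pt u t x) p.1 p.2) :=
  contDiff_snd.mul (contDiff_pt (n := 1) (by norm_num) hu)

/-- The derivative of `cross`: the boundary contribution at `ℓ(t)` vanishes since `u - r` does, and
the last integrand is `u_t r_t`. -/
lemma hasDerivAt_cross {u : ℝ → ℝ → ℝ} (hu : ContDiff ℝ 2 (fun p : ℝ × ℝ => u p.1 p.2))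
    {ℓ : ℝ → ℝ} {t d : ℝ} (hl : 0 < ℓ t) (hbc : u t (ℓ t) = 0) (hd : HasDerivAt ℓ d t) :
    HasDerivAt (cross ℓ u)
      ((∫ x in (0:ℝ)..ℓ t, pt (pt u) t x * (u t x - u t 0 * (1 - x / ℓ t)))
        + (∫ x in (0:ℝ)..ℓ t, pt u t x ^ 2)
        - ∫ x in (0:ℝ)..ℓ t, pt u t x
            * (pt u t 0 * (1 - x / ℓ t) + u t 0 * d * x / ℓ t ^ 2)) t := by
  have hu1 : ContDiff ℝ 1 (fun p : ℝ × ℝ => u p.1 p.2) := hu.of_le (by norm_num)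
  have hpt := contDiff_pt (n := 1) (by norm_num) hu
  have ha := continuous_slice hpt.continuous t
  have hus := continuous_slice hu.continuous t
  have hat := continuous_slice (contDiff_pt (n := 0) (by simp) hpt).continuous t
  have d1 := hasDerivAt_moving (g := fun t x => pt u t x * u t x) (contDiff_pt_mul_self hu) hd
  have d2 := hasDerivAt_moving hpt hd
  have d3 := hasDerivAt_moving (g := fun t x => x * pt u t x) (contDiff_mul_pt hu) hd
  have dw := hasDerivAt_pt hu1 t 0
  have D := (d1.sub (dw.mul d2)).add ((dw.mul (hd.inv hl.ne')).mul d3)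
  have hfun : cross ℓ u = _ := funext fun s => cross_eq hu ℓ s
  rw [hfun]
  refine D.congr_deriv ?_
  have p1 : ∀ x, pt (fun t x => pt u t x * u t x) t x = pt (pt u) t x * u t x + pt u t x ^ 2 := by
    intro x
    refine (((hasDerivAt_pt hpt t x).mul (hasDerivAt_pt hu1 t x)).deriv).trans ?_
    ring
  have p3 : ∀ x, pt (fun t x => x * pt u t x) t x = x * pt (pt u) t x :=
    fun x => ((hasDerivAt_pt hpt t x).const_mul x).deriv
  simp only [p1, p3, hbc, Pi.mul_apply, Pi.inv_apply]
  have i1 : ∫ x in (0:ℝ)..ℓ t, pt (pt u) t x * (u t x - u t 0 * (1 - x / ℓ t))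
      = (∫ x in (0:ℝ)..ℓ t, pt (pt u) t x * u t x) - u t 0 * (∫ x in (0:ℝ)..ℓ t, pt (pt u) t x)
        + u t 0 * (ℓ t)⁻¹ * ∫ x in (0:ℝ)..ℓ t, x * pt (pt u) t x := by
    rw [← intervalIntegral.integral_const_mul, ← intervalIntegral.integral_const_mul,
      ← intervalIntegral.integral_sub (Continuous.intervalIntegrable (by fun_prop) _ _)
        (Continuous.intervalIntegrable (by fun_prop) _ _),
      ← intervalIntegral.integral_add (Continuous.intervalIntegrable (by fun_prop) _ _)
        (Continuous.intervalIntegrable (by fun_prop) _ _)]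
    congr 1
    funext x
    ring
  have i2 : ∫ x in (0:ℝ)..ℓ t, pt u t x * (pt u t 0 * (1 - x / ℓ t) + u t 0 * d * x / ℓ t ^ 2)
      = pt u t 0 * (∫ x in (0:ℝ)..ℓ t, pt u t x)
        + (u t 0 * d / ℓ t ^ 2 - pt u t 0 / ℓ t) * ∫ x in (0:ℝ)..ℓ t, x * pt u t x := by
    rw [← intervalIntegral.integral_const_mul, ← intervalIntegral.integral_const_mul,
      ← intervalIntegral.integral_add (Continuous.intervalIntegrable (by fun_prop) _ _)
        (Continuous.intervalIntegrable (by fun_prop) _ _)]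
    congr 1
    funext x
    ring
  rw [i1, i2, intervalIntegral.integral_add (Continuous.intervalIntegrable (by fun_prop) _ _)
        (Continuous.intervalIntegrable (by fun_prop) _ _)]
  field_simp
  ring

/-- The Lyapunov functional `Ẽ + 2mε ∫ u_t (u - r)`, with `Ẽ` written as `E - w²/(2ℓ)`. -/
noncomputable def lyap (m ε : ℝ) (ℓ : ℝ → ℝ) (u : ℝ → ℝ → ℝ) (t : ℝ) : ℝ :=
  En ε ℓ u t - u t 0 ^ 2 * (2 * ℓ t)⁻¹ + 2 * m * ε * cross ℓ u t

/-- The algebra behind the decay of the Lyapunov functional. Here `X = ∫ ε²u_t²`, `Y = ∫ v_x²`,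
`N = ∫ ε u_t v` with `v = u - r`, `R = ∫ ε² u_t r_t`, `Q = ∫ ε² r_t²` and `e = E'`; the term
`w * w' / l - w ^ 2 * d / (2 * l ^ 2)` is the time derivative of `w²/(2ℓ)`. -/
lemma lyap_algebra {m ν ε X Y N R Q e w w' d l b0 M l0 L : ℝ} (hε : 0 < ε) (hm : 0 < m)
    (hl0 : 0 < l0) (hl : l0 ≤ l) (hw : |w| ≤ M) (hd : 0 ≤ d) (hL : 0 < L)
    (he : e ≤ -(ν / ε) * X - w' * b0)
    (hN : 2 * m * |ν - m| * |N| ≤ (ν - 3 * m) * X + 3 / 2 * m * Y)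
    (hR : |R| ≤ X / 4 + Q) (hQ : Q ≤ 2 * ε * L * (w' ^ 2 + M ^ 2 / l0 ^ 2 * d)) :
    e - (w * w' / l - w ^ 2 * d / (2 * l ^ 2)) + 2 * m / ε * (-Y - ν * N + X - R)
        + m / ε * (X / 2 + Y / 2 + 2 * m * N)
      ≤ (1 + M ^ 2 / l0 ^ 2 + 4 * m * L * (1 + M ^ 2 / l0 ^ 2))
          * (d + w' ^ 2 + b0 ^ 2 + 1) := by
  have hlp : 0 < l := hl0.trans_le hl
  have hN' : -(2 * m * (ν - m) * N) ≤ 2 * m * |ν - m| * |N| := by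
    have := neg_abs_le ((ν - m) * N)
    rw [abs_mul] at this
    linarith [mul_le_mul_of_nonneg_left this hm.le]
  have hR' : -R ≤ X / 4 + Q := (neg_le_abs R).trans hR
  have hmain : -(ν / ε) * X + 2 * m / ε * (-Y - ν * N + X - R)
      + m / ε * (X / 2 + Y / 2 + 2 * m * N) ≤ 4 * m * L * (w' ^ 2 + M ^ 2 / l0 ^ 2 * d) := by
    have h : -(ν / ε) * X + 2 * m / ε * (-Y - ν * N + X - R)
      + m / ε * (X / 2 + Y / 2 + 2 * m * N) = (-ν * X + 2 * m * (-Y - ν * N + X - R)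
      + m * (X / 2 + Y / 2 + 2 * m * N)) / ε := by
      field_simp
    rw [h, div_le_iff₀ hε]
    have hN'' := hN'.trans hN
    have hR'' := mul_le_mul_of_nonneg_left hR' hm.le
    have hQ' := mul_le_mul_of_nonneg_left hQ hm.le
    linarith
  set B := M ^ 2 / l0 ^ 2 with hB
  have hwl : (w / l) ^ 2 ≤ B := by
    rw [div_pow, hB]
    have h1 : w ^ 2 ≤ M ^ 2 := by
      rw [← sq_abs w]; exact pow_le_pow_left₀ (abs_nonneg w) hw 2
    gcongr
  have hB0 : 0 ≤ B := (sq_nonneg _).trans hwl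
  have e1 : w * w' / l = (w / l) * w' := by ring
  have e2 : w ^ 2 * d / (2 * l ^ 2) = (w / l) ^ 2 * d / 2 := by field_simp
  have k1 : (w / l) ^ 2 * d ≤ B * d := mul_le_mul_of_nonneg_right hwl hd
  have k2 : -(w' * b0) ≤ (w' ^ 2 + b0 ^ 2) / 2 := by nlinarith [sq_nonneg (w' + b0)]
  have k3 : -((w / l) * w') ≤ (B + w' ^ 2) / 2 := by nlinarith [sq_nonneg (w / l + w')]
  have k4 : 4 * m * L * (w' ^ 2 + B * d) ≤ 4 * m * L * (1 + B) * (d + w' ^ 2 + b0 ^ 2 + 1) := by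
    rw [mul_assoc _ (1 + B)]
    apply mul_le_mul_of_nonneg_left _ (by positivity)
    have : 0 ≤ B * (w' ^ 2 + b0 ^ 2 + 1) := by positivity
    linarith [sq_nonneg b0]
  have k5 : (w' ^ 2 + b0 ^ 2) / 2 + (B + w' ^ 2) / 2 + B * d / 2
      ≤ (1 + B) * (d + w' ^ 2 + b0 ^ 2 + 1) := by
    have : 0 ≤ B * d := by positivity
    have : 0 ≤ B * (w' ^ 2 + b0 ^ 2) := by positivity
    linarith [sq_nonneg b0]
  rw [e1, e2]
  linarith

/-- Young's inequality for the cross term followed by the Poincaré inequality for `u - r`, which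
vanishes at both ends of the interval. -/
lemma young_cross {u : ℝ → ℝ → ℝ} (hu : ContDiff ℝ 2 (fun p : ℝ × ℝ => u p.1 p.2))
    {ε θ t l L : ℝ} (hθ : 0 < θ) (hl : 0 < l) (hlL : l ≤ L) (hbc : u t l = 0) :
    |∫ x in (0:ℝ)..l, (ε * pt u t x) * (u t x - u t 0 * (1 - x / l))|
      ≤ θ / 2 * (∫ x in (0:ℝ)..l, (ε * pt u t x) ^ 2)
        + 1 / (2 * θ) * ((L / 3) ^ 2 * ∫ x in (0:ℝ)..l, (px u t x + u t 0 / l) ^ 2) := by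
  have hu1 : ContDiff ℝ 1 (fun p : ℝ × ℝ => u p.1 p.2) := hu.of_le (by norm_num)
  have ha := continuous_slice (contDiff_pt (n := 1) (by norm_num) hu).continuous t
  have hb := continuous_slice (contDiff_px (n := 1) (by norm_num) hu).continuous t
  have hus := continuous_slice hu.continuous t
  have hv : ∀ x, HasDerivAt (fun x => u t x - u t 0 * (1 - x / l)) (px u t x + u t 0 / l) x := by
    intro x
    refine ((hasDerivAt_px hu1 t x).sub
      ((((hasDerivAt_id x).div_const l).const_sub 1).const_mul (u t 0))).congr_deriv ?_
    ring
  have hP := poincare hl hv (by fun_prop) (by ring) (by rw [hbc, div_self hl.ne']; ring)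
  refine (young_integral hl.le hθ (by fun_prop) (by fun_prop)).trans ?_
  have hY : 0 ≤ ∫ x in (0:ℝ)..l, (px u t x + u t 0 / l) ^ 2 :=
    intervalIntegral.integral_nonneg hl.le fun x _ => sq_nonneg _
  have : (l / 3) ^ 2 ≤ (L / 3) ^ 2 := by gcongr
  gcongr
  exact hP.trans (mul_le_mul_of_nonneg_right this hY)

lemma Emod_split {u : ℝ → ℝ → ℝ} (hu : ContDiff ℝ 2 (fun p : ℝ × ℝ => u p.1 p.2)) {ℓ : ℝ → ℝ}
    {ε t : ℝ} :
    Emod ε ℓ u t = (∫ x in (0:ℝ)..ℓ t, (ε * pt u t x) ^ 2) / 2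
      + (∫ x in (0:ℝ)..ℓ t, (px u t x + u t 0 / ℓ t) ^ 2) / 2 := by
  have ha := continuous_slice (contDiff_pt (n := 1) (by norm_num) hu).continuous t
  have hb := continuous_slice (contDiff_px (n := 1) (by norm_num) hu).continuous t
  unfold Emod
  simp only [mul_pow]
  rw [intervalIntegral.integral_add (Continuous.intervalIntegrable (by fun_prop) _ _)
      (Continuous.intervalIntegrable (by fun_prop) _ _)]
  ring

lemma eps_cross {u : ℝ → ℝ → ℝ} {ℓ : ℝ → ℝ} {ε t : ℝ} :
    ε * cross ℓ u t
      = ∫ x in (0:ℝ)..ℓ t, (ε * pt u t x) * (u t x - u t 0 * (1 - x / ℓ t)) := by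
  unfold cross
  rw [← intervalIntegral.integral_const_mul]
  congr 1
  funext x
  ring

lemma lyap_eq {u : ℝ → ℝ → ℝ} (hu : ContDiff ℝ 2 (fun p : ℝ × ℝ => u p.1 p.2)) {ℓ : ℝ → ℝ}
    {m ε t : ℝ} (hl : 0 < ℓ t) (hbc : u t (ℓ t) = 0) :
    lyap m ε ℓ u t = Emod ε ℓ u t + 2 * m * (ε * cross ℓ u t) := by
  rw [Emod_eq hu hl hbc, lyap]
  ring

/-- The Lyapunov functional is comparable to `Ẽ`; the ratio `(8/5)/(2/5) = 4` of the two constants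
is the prefactor of the decay estimate. -/
lemma lyap_sandwich {u : ℝ → ℝ → ℝ} (hu : ContDiff ℝ 2 (fun p : ℝ × ℝ => u p.1 p.2)) {ℓ : ℝ → ℝ}
    {ε ν t L : ℝ} (hν : 0 < ν) (hl : 0 < ℓ t) (hlL : ℓ t ≤ L) (hbc : u t (ℓ t) = 0) :
    2 / 5 * Emod ε ℓ u t ≤ lyap (mconst ν L) ε ℓ u t ∧
      lyap (mconst ν L) ε ℓ u t ≤ 8 / 5 * Emod ε ℓ u t := by
  have hL : 0 < L := hl.trans_le hlL
  obtain ⟨hm, -, hm2, -⟩ := mconst_facts hν hL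
  rw [lyap_eq hu hl hbc, Emod_split hu, eps_cross]
  have hY := young_cross (ε := ε) hu (show 0 < L / 3 by positivity) hl hlL hbc
  have hX0 : 0 ≤ ∫ x in (0:ℝ)..ℓ t, (ε * pt u t x) ^ 2 :=
    intervalIntegral.integral_nonneg hl.le fun x _ => sq_nonneg _
  have hY0 : 0 ≤ ∫ x in (0:ℝ)..ℓ t, (px u t x + u t 0 / ℓ t) ^ 2 :=
    intervalIntegral.integral_nonneg hl.le fun x _ => sq_nonneg _
  set X := ∫ x in (0:ℝ)..ℓ t, (ε * pt u t x) ^ 2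
  set Y := ∫ x in (0:ℝ)..ℓ t, (px u t x + u t 0 / ℓ t) ^ 2
  set N := ∫ x in (0:ℝ)..ℓ t, (ε * pt u t x) * (u t x - u t 0 * (1 - x / ℓ t))
  set m := mconst ν L
  have e : L / 3 / 2 * X + 1 / (2 * (L / 3)) * ((L / 3) ^ 2 * Y) = L / 3 * ((X + Y) / 2) := by
    field_simp
  rw [e] at hY
  have h2 : 2 * m * |N| ≤ 3 / 5 * ((X + Y) / 2) := by
    have h3 := mul_le_mul_of_nonneg_left hY hm.le
    have h4 := mul_le_mul_of_nonneg_right hm2 (show 0 ≤ (X + Y) / 2 by linarith)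
    linarith
  have h5 := mul_le_mul_of_nonneg_left (le_abs_self N) hm.le
  have h6 := mul_le_mul_of_nonneg_left (neg_abs_le N) hm.le
  constructor <;> linarith

/-- Bound for `∫ (ε r_t)²`, where `ε ℓ' ≤ 1` turns the quadratic `ε² ℓ'²` into the linear `ε ℓ'`. -/
lemma rt_bound {ε w w' d l l0 L M : ℝ} (hε : 0 < ε) (hε1 : ε ≤ 1) (hl0 : 0 < l0) (hl : l0 ≤ l)
    (hlL : l ≤ L) (hw : |w| ≤ M) (hd : 0 ≤ d) (hεd : ε * d ≤ 1) :
    ∫ x in (0:ℝ)..l, (ε * (w' * (1 - x / l) + w * d * x / l ^ 2)) ^ 2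
      ≤ 2 * ε * L * (w' ^ 2 + M ^ 2 / l0 ^ 2 * d) := by
  have hlp : 0 < l := hl0.trans_le hl
  have hwl : (w / l) ^ 2 ≤ M ^ 2 / l0 ^ 2 := by
    rw [div_pow]
    have h1 : w ^ 2 ≤ M ^ 2 := by
      rw [← sq_abs w]; exact pow_le_pow_left₀ (abs_nonneg w) hw 2
    gcongr
  set B := M ^ 2 / l0 ^ 2 with hB
  have hB0 : 0 ≤ B := by positivity
  have hC0 : 0 ≤ 2 * ε * (w' ^ 2 + B * d) := by positivity
  have hle : ∫ x in (0:ℝ)..l, (ε * (w' * (1 - x / l) + w * d * x / l ^ 2)) ^ 2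
      ≤ ∫ x in (0:ℝ)..l, 2 * ε * (w' ^ 2 + B * d) := by
    apply intervalIntegral.integral_mono_on hlp.le
      (Continuous.intervalIntegrable (by fun_prop) _ _)
      (Continuous.intervalIntegrable (by fun_prop) _ _)
    intro x hx
    have hy0 : 0 ≤ x / l := div_nonneg hx.1 hlp.le
    have hy1 : x / l ≤ 1 := (div_le_one hlp).2 hx.2
    have e : w * d * x / l ^ 2 = (w / l) * d * (x / l) := by field_simp
    rw [e]
    generalize x / l = y at hy0 hy1
    set c := w / l
    have s1 : (w' * (1 - y) + c * d * y) ^ 2 ≤ 2 * (w' * (1 - y)) ^ 2 + 2 * (c * d * y) ^ 2 := by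
      nlinarith [sq_nonneg (w' * (1 - y) - c * d * y)]
    have s2 : (w' * (1 - y)) ^ 2 ≤ w' ^ 2 := by
      rw [mul_pow]
      exact mul_le_of_le_one_right (sq_nonneg _) (pow_le_one₀ (by linarith) (by linarith))
    have s3 : (c * d * y) ^ 2 ≤ B * d ^ 2 := by
      rw [mul_pow, mul_pow]
      refine (mul_le_of_le_one_right (by positivity) (pow_le_one₀ hy0 hy1)).trans ?_
      exact mul_le_mul_of_nonneg_right hwl (sq_nonneg _)
    have s4 : ε ^ 2 * w' ^ 2 ≤ ε * w' ^ 2 :=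
      mul_le_mul_of_nonneg_right (by nlinarith) (sq_nonneg _)
    have s5 : ε ^ 2 * (B * d ^ 2) ≤ ε * (B * d) := by
      have : ε * (B * d) * (ε * d) ≤ ε * (B * d) := mul_le_of_le_one_right (by positivity) hεd
      linarith
    rw [mul_pow]
    have s6 := mul_le_mul_of_nonneg_left (s1.trans (by linarith :
      _ ≤ 2 * w' ^ 2 + 2 * (B * d ^ 2))) (sq_nonneg ε)
    linarith
  refine hle.trans ?_
  rw [intervalIntegral.integral_const, smul_eq_mul, sub_zero]
  have := mul_le_mul_of_nonneg_right hlL hC0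
  linarith

/-- The differential inequality for the Lyapunov functional at a point of differentiability of
`ℓ`. -/
lemma lyap_decay {u : ℝ → ℝ → ℝ} (hu : ContDiff ℝ 2 (fun p : ℝ × ℝ => u p.1 p.2)) {ℓ : ℝ → ℝ}
    {ε ν t l0 L M d e : ℝ} (hν : 0 < ν) (hε : 0 < ε) (hε1 : ε ≤ 1) (hl0 : 0 < l0)
    (hl : l0 ≤ ℓ t) (hlL : ℓ t ≤ L) (hbc : u t (ℓ t) = 0) (hw : |u t 0| ≤ M)
    (hpde : ∀ x, 0 < x → x < ℓ t → ε ^ 2 * ptt u t x - pxx u t x + ν * ε * pt u t x = 0)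
    (hℓ : HasDerivAt ℓ d t) (hd : 0 ≤ d) (hεd : ε * d ≤ 1)
    (hE : HasDerivAt (En ε ℓ u) e t)
    (he : e ≤ -(ν / ε) * (∫ x in (0:ℝ)..ℓ t, (ε * pt u t x) ^ 2) - pt u t 0 * px u t 0) :
    ∃ F', HasDerivAt (lyap (mconst ν L) ε ℓ u) F' t ∧
      F' + mconst ν L / ε * lyap (mconst ν L) ε ℓ u t
        ≤ (1 + M ^ 2 / l0 ^ 2 + 4 * mconst ν L * L * (1 + M ^ 2 / l0 ^ 2))
          * (d + pt u t 0 ^ 2 + px u t 0 ^ 2 + 1) := by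
  have hlp : 0 < ℓ t := hl0.trans_le hl
  have hL : 0 < L := hlp.trans_le hlL
  obtain ⟨hm, hmν, -, hm3⟩ := mconst_facts hν hL
  have ha := continuous_slice (contDiff_pt (n := 1) (by norm_num) hu).continuous t
  have dw := hasDerivAt_pt (hu.of_le (by norm_num)) t 0
  have dG := hasDerivAt_cross hu hlp hbc hℓ
  have D := (hE.sub ((dw.pow 2).mul ((hℓ.const_mul 2).inv (by positivity)))).add
    (dG.const_mul (2 * mconst ν L * ε))
  have hV := virial hu hlp hbc hpde
  have hNθ := young_cross (ε := ε) hu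
    (show 0 < (ν - mconst ν L) * (L / 3) ^ 2 / (3 / 2) by
      have : 0 < ν - mconst ν L := by linarith
      positivity) hlp hlL hbc
  have hR := young_integral (l := ℓ t) (θ := 1 / 2) hlp.le (by norm_num)
    (p := fun x => ε * pt u t x)
    (q := fun x => ε * (pt u t 0 * (1 - x / ℓ t) + u t 0 * d * x / ℓ t ^ 2))
    (by fun_prop) (by fun_prop)
  have hQ := rt_bound (w' := pt u t 0) hε hε1 hl0 hl hlL hw hd hεd
  have hRe : ε ^ 2 * (∫ x in (0:ℝ)..ℓ t, pt u t x
            * (pt u t 0 * (1 - x / ℓ t) + u t 0 * d * x / ℓ t ^ 2))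
      = ∫ x in (0:ℝ)..ℓ t, (ε * pt u t x)
          * (ε * (pt u t 0 * (1 - x / ℓ t) + u t 0 * d * x / ℓ t ^ 2)) := by
    rw [← intervalIntegral.integral_const_mul]
    congr 1
    funext x
    ring
  have hXe : ε ^ 2 * (∫ x in (0:ℝ)..ℓ t, pt u t x ^ 2)
      = ∫ x in (0:ℝ)..ℓ t, (ε * pt u t x) ^ 2 := by
    rw [← intervalIntegral.integral_const_mul]
    congr 1
    funext x
    ring
  have hX0 : 0 ≤ ∫ x in (0:ℝ)..ℓ t, (ε * pt u t x) ^ 2 :=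
    intervalIntegral.integral_nonneg hlp.le fun x _ => sq_nonneg _
  have hlyap := lyap_eq (m := mconst ν L) (ε := ε) hu hlp hbc
  rw [Emod_split hu, eps_cross] at hlyap
  refine ⟨_, D, ?_⟩
  rw [hlyap]
  set m := mconst ν L
  set A1 := ∫ x in (0:ℝ)..ℓ t, pt (pt u) t x * (u t x - u t 0 * (1 - x / ℓ t))
  set A2 := ∫ x in (0:ℝ)..ℓ t, pt u t x ^ 2
  set A3 := ∫ x in (0:ℝ)..ℓ t, pt u t x
            * (pt u t 0 * (1 - x / ℓ t) + u t 0 * d * x / ℓ t ^ 2)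
  set X := ∫ x in (0:ℝ)..ℓ t, (ε * pt u t x) ^ 2
  set Y := ∫ x in (0:ℝ)..ℓ t, (px u t x + u t 0 / ℓ t) ^ 2
  set N := ∫ x in (0:ℝ)..ℓ t, (ε * pt u t x) * (u t x - u t 0 * (1 - x / ℓ t))
  set R := ∫ x in (0:ℝ)..ℓ t, (ε * pt u t x)
          * (ε * (pt u t 0 * (1 - x / ℓ t) + u t 0 * d * x / ℓ t ^ 2))
  set Q := ∫ x in (0:ℝ)..ℓ t, (ε * (pt u t 0 * (1 - x / ℓ t) + u t 0 * d * x / ℓ t ^ 2)) ^ 2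
  have hνm : 0 < ν - m := by linarith
  -- The weight `θ` makes the `Y`-coefficient exactly `3m/2`; the `X`-coefficient is then
  -- controlled by the third entry of the minimum defining `m`.
  have hN : 2 * m * |ν - m| * |N| ≤ (ν - 3 * m) * X + 3 / 2 * m * Y := by
    rw [abs_of_pos hνm]
    have h1 := mul_le_mul_of_nonneg_left hNθ (show 0 ≤ 2 * m * (ν - m) by positivity)
    refine h1.trans ?_
    have e1 : 2 * m * (ν - m) * ((ν - m) * (L / 3) ^ 2 / (3 / 2) / 2 * X
        + 1 / (2 * ((ν - m) * (L / 3) ^ 2 / (3 / 2))) * ((L / 3) ^ 2 * Y))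
        = 2 / 3 * (m * (L / 3) ^ 2 * (ν - m) ^ 2) * X + 3 / 2 * m * Y := by
      field_simp
    rw [e1]
    have h2 : m * (L / 3) ^ 2 * (ν - m) ^ 2 ≤ 11 / 20 * (ν - 7 / 4 * m) := by
      have h3 : (ν - m) ^ 2 ≤ ν * (ν - 7 / 4 * m) := by nlinarith
      have h4 := mul_le_mul_of_nonneg_left h3 (show 0 ≤ m * (L / 3) ^ 2 by positivity)
      have h5 := mul_le_mul_of_nonneg_right hm3 (show 0 ≤ ν - 7 / 4 * m by linarith)
      linarith
    have h6 : 2 / 3 * (m * (L / 3) ^ 2 * (ν - m) ^ 2) ≤ ν - 3 * m := by linarith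
    linarith [mul_le_mul_of_nonneg_right h6 hX0]
  have hR' : |R| ≤ X / 4 + Q := by
    refine hR.trans (le_of_eq ?_)
    norm_num
    ring
  have key := lyap_algebra (b0 := px u t 0) hε hm hl0 hl hw hd hL he hN hR' hQ
  refine le_trans (le_of_eq ?_) key
  have hG : 2 * m * ε * (A1 + A2 - A3) = 2 * m / ε * (-Y - ν * N + X - R) := by
    rw [← hXe, ← hRe]
    have : -Y - ν * N = ε ^ 2 * A1 := by linarith
    rw [this]
    field_simp
  rw [hG]
  simp only [Pi.pow_apply, Pi.inv_apply]
  have hw2 : (↑2 * u t 0 ^ (2 - 1) * pt u t 0 * (2 * ℓ t)⁻¹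
      + u t 0 ^ 2 * (-(2 * d) / (2 * ℓ t) ^ 2))
      = u t 0 * pt u t 0 / ℓ t - u t 0 ^ 2 * d / (2 * ℓ t ^ 2) := by
    norm_num
    field_simp
    ring
  push_cast at hw2 ⊢
  rw [hw2]

/-! ### Integration in time -/

/-- The energy balance, with the fracture energy replaced by its monotonicity, bounds `E'` by minus
the friction rate and minus the power of the loading. -/
lemma dissipation {u : ℝ → ℝ → ℝ} (hu : ContDiff ℝ 2 (fun p : ℝ × ℝ => u p.1 p.2)) {ℓ : ℝ → ℝ}
    {ε ν t T l0 L d : ℝ} {K : NNReal} (hε : 0 < ε)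
    (hlip : LipschitzOnWith K ℓ (Icc 0 T)) (hmap : ∀ t ∈ Icc 0 T, ℓ t ∈ Icc l0 L)
    (hanti : AntitoneOn (fun s => En ε ℓ u s + Afr ε ν ℓ u s + Wk u s) (Icc 0 T))
    (ht : t ∈ Ioo 0 T) (hd : HasDerivAt ℓ d t) :
    ∃ e, HasDerivAt (En ε ℓ u) e t ∧
      e ≤ -(ν / ε) * (∫ x in (0:ℝ)..ℓ t, (ε * pt u t x) ^ 2) - pt u t 0 * px u t 0 := by
  have hT : 0 ≤ T := (ht.1.trans ht.2).le
  have hpt := contDiff_pt (n := 1) (by norm_num) hu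
  have hpx := contDiff_px (n := 1) (by norm_num) hu
  have hE : HasDerivAt (En ε ℓ u) _ t :=
    (hasDerivAt_moving (g := fun t x => ε ^ 2 * (pt u t x) ^ 2 + (px u t x) ^ 2)
      ((contDiff_const.mul (hpt.pow 2)).add (hpx.pow 2)) hd).const_mul (1 / 2)
  have hAc : ContinuousOn (fun τ => ∫ x in (0:ℝ)..ℓ τ, ε * (pt u τ x) ^ 2) (Icc 0 T) := by
    have := (ac_moving (g := fun t x => ε * (pt u t x) ^ 2)
      (contDiff_const.mul (hpt.pow 2)) hT hlip hmap).continuousOn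
    rwa [uIcc_of_le hT] at this
  have hA : HasDerivAt (Afr ε ν ℓ u) (ν * ∫ x in (0:ℝ)..ℓ t, ε * (pt u t x) ^ 2) t := by
    refine HasDerivAt.const_mul ν (intervalIntegral.integral_hasDerivAt_right ?_ ?_ ?_)
    · refine ContinuousOn.intervalIntegrable (hAc.mono ?_)
      rw [uIcc_of_le ht.1.le]
      exact Icc_subset_Icc_right ht.2.le
    · exact (hAc.mono Ioo_subset_Icc_self).stronglyMeasurableAtFilter isOpen_Ioo t ht
    · exact hAc.continuousAt (Icc_mem_nhds ht.1 ht.2)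
  have hWc : Continuous (fun τ => pt u τ 0 * px u τ 0) :=
    (hpt.continuous.comp (continuous_id.prodMk continuous_const)).mul
      (hpx.continuous.comp (continuous_id.prodMk continuous_const))
  have hW : HasDerivAt (Wk u) (pt u t 0 * px u t 0) t :=
    intervalIntegral.integral_hasDerivAt_right (hWc.intervalIntegrable _ _)
      (hWc.stronglyMeasurableAtFilter _ _) hWc.continuousAt
  have hs := (hE.add hA).add hW
  have hnp := hanti.derivWithin_nonpos (x := t)
  rw [derivWithin_of_mem_nhds (Icc_mem_nhds ht.1 ht.2)] at hnp
  have hs' := hs.deriv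
  refine ⟨_, hE, ?_⟩
  have hX : -(ν / ε) * (∫ x in (0:ℝ)..ℓ t, (ε * pt u t x) ^ 2)
      = - (ν * ∫ x in (0:ℝ)..ℓ t, ε * (pt u t x) ^ 2) := by
    rw [← intervalIntegral.integral_const_mul, ← intervalIntegral.integral_const_mul,
      ← intervalIntegral.integral_neg]
    congr 1
    funext x
    field_simp
  rw [hX]
  have h2 := hs'.symm.trans_le hnp
  linarith

/-- Absolute continuity of the Lyapunov functional multiplied by the integrating factor. -/
lemma ac_lyap {u : ℝ → ℝ → ℝ} (hu : ContDiff ℝ 2 (fun p : ℝ × ℝ => u p.1 p.2)) {ℓ : ℝ → ℝ}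
    {m ε T l0 L : ℝ} {K : NNReal} (hT : 0 ≤ T) (hl0 : 0 < l0)
    (hlip : LipschitzOnWith K ℓ (Icc 0 T)) (hmap : ∀ t ∈ Icc 0 T, ℓ t ∈ Icc l0 L) :
    AbsolutelyContinuousOnInterval (fun t => Real.exp (m * t / ε) * lyap m ε ℓ u t) 0 T := by
  have hpt := contDiff_pt (n := 1) (by norm_num) hu
  have hpx := contDiff_px (n := 1) (by norm_num) hu
  have hu1 : ContDiff ℝ 1 (fun p : ℝ × ℝ => u p.1 p.2) := hu.of_le (by norm_num)
  have hu0 : ContDiff ℝ 1 (fun p : ℝ × ℝ => u p.1 0) :=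
    hu1.comp (contDiff_fst.prodMk contDiff_const)
  have hne : ∀ p ∈ Icc (0:ℝ) T ×ˢ Icc l0 L, p.2 ≠ 0 := fun p hp => (hl0.trans_le hp.2.1).ne'
  have hexp := ac_comp (f := fun p => Real.exp (m * p.1 / ε)) (ℓ := ℓ) (l0 := l0) (L := L)
    (((contDiff_const.mul contDiff_fst).div_const ε).exp).contDiffOn hT hlip hmap
  have h1 := (ac_moving (g := fun t x => ε ^ 2 * (pt u t x) ^ 2 + (px u t x) ^ 2)
      ((contDiff_const.mul (hpt.pow 2)).add (hpx.pow 2)) hT hlip hmap).const_mul (1 / 2)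
  have h2 := ac_comp (f := fun p => u p.1 0 ^ 2 * (2 * p.2)⁻¹) (ℓ := ℓ) (l0 := l0) (L := L)
    ((hu0.pow 2).contDiffOn.mul ((contDiff_const.mul contDiff_snd).contDiffOn.inv
      (fun p hp => mul_ne_zero two_ne_zero (hne p hp)))) hT hlip hmap
  have h3 := ac_moving (g := fun t x => pt u t x * u t x) (contDiff_pt_mul_self hu) hT hlip hmap
  have h4 := ac_comp (f := fun p => u p.1 0) (ℓ := ℓ) (l0 := l0) (L := L) hu0.contDiffOn hT hlip hmap
  have h5 := ac_moving hpt hT hlip hmap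
  have h6 := ac_comp (f := fun p => u p.1 0 * (p.2)⁻¹) (ℓ := ℓ) (l0 := l0) (L := L)
    (hu0.contDiffOn.mul (contDiff_snd.contDiffOn.inv hne)) hT hlip hmap
  have h7 := ac_moving (g := fun t x => x * pt u t x) (contDiff_mul_pt hu) hT hlip hmap
  have h8 := hexp.fun_mul ((h1.fun_sub h2).fun_add
    (((h3.fun_sub (h4.fun_mul h5)).fun_add (h6.fun_mul h7)).const_mul (2 * m * ε)))
  simp only [lyap, cross_eq hu]
  exact h8

/-- The decay estimate for a globally `C²` displacement on a fixed interval `[0,t]`. -/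
theorem decay_global {u : ℝ → ℝ → ℝ} (hu : ContDiff ℝ 2 (fun p : ℝ × ℝ => u p.1 p.2)) {ℓ : ℝ → ℝ}
    {ε ν t l0 L M : ℝ} {K : NNReal} (hν : 0 < ν) (hε : 0 < ε) (hε1 : ε ≤ 1) (hl0 : 0 < l0)
    (ht : 0 ≤ t)
    (hlip : LipschitzOnWith K ℓ (Icc 0 t)) (hmap : ∀ s ∈ Icc 0 t, ℓ s ∈ Icc l0 L)
    (hmono : MonotoneOn ℓ (Icc 0 t))
    (hspeed : ∀ᵐ s ∂volume, s ∈ Ioi (0:ℝ) → ∀ d, HasDerivAt ℓ d s → d < 1 / ε)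
    (hpde : ∀ s ∈ Ioo 0 t, ∀ x, 0 < x → x < ℓ s →
      ε ^ 2 * ptt u s x - pxx u s x + ν * ε * pt u s x = 0)
    (hbc : ∀ s ∈ Icc 0 t, u s (ℓ s) = 0) (hw : ∀ s ∈ Icc 0 t, |u s 0| ≤ M)
    (hanti : AntitoneOn (fun s => En ε ℓ u s + Afr ε ν ℓ u s + Wk u s) (Icc 0 t)) :
    Emod ε ℓ u t ≤ 4 * Emod ε ℓ u 0 * Real.exp (-(mconst ν L * t / ε))
      + 5 / 2 * (1 + M ^ 2 / l0 ^ 2 + 4 * mconst ν L * L * (1 + M ^ 2 / l0 ^ 2))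
        * ∫ τ in (0:ℝ)..t, (deriv ℓ τ + (pt u τ 0) ^ 2 + (px u τ 0) ^ 2 + 1)
            * Real.exp (-(mconst ν L * (t - τ) / ε)) := by
  set m := mconst ν L with hm
  set C1 := 1 + M ^ 2 / l0 ^ 2 + 4 * m * L * (1 + M ^ 2 / l0 ^ 2) with hC1
  have hpt := contDiff_pt (n := 1) (by norm_num) hu
  have hpx := contDiff_px (n := 1) (by norm_num) hu
  have ha0 : Continuous (fun τ => pt u τ 0) :=
    hpt.continuous.comp (continuous_id.prodMk continuous_const)
  have hb0 : Continuous (fun τ => px u τ 0) :=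
    hpx.continuous.comp (continuous_id.prodMk continuous_const)
  have hacl : AbsolutelyContinuousOnInterval ℓ 0 t :=
    ac_comp (f := fun p => p.2) contDiff_snd.contDiffOn ht hlip hmap
  have hac := ac_lyap (m := m) (ε := ε) hu ht hl0 hlip hmap
  have hftc := hac.integral_deriv_eq_sub
  -- The density of `P' = (e^{ms/ε} F)'` is bounded a.e. by the weighted source term.
  have hle : ∫ s in (0:ℝ)..t, deriv (fun t => Real.exp (m * t / ε) * lyap m ε ℓ u t) s
      ≤ ∫ s in (0:ℝ)..t, C1 * ((deriv ℓ s + (pt u s 0) ^ 2 + (px u s 0) ^ 2 + 1)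
          * Real.exp (m * s / ε)) := by
    refine intervalIntegral.integral_mono_ae_restrict ht hac.intervalIntegrable_deriv ?_ ?_
    · refine IntervalIntegrable.const_mul (IntervalIntegrable.mul_continuousOn ?_
        (Continuous.continuousOn (by fun_prop))) _
      have h0 : Continuous fun s => (pt u s 0) ^ 2 + (px u s 0) ^ 2 + 1 := by fun_prop
      refine (hacl.intervalIntegrable_deriv.add (h0.intervalIntegrable 0 t)).congr ?_
      intro s _
      simp only [add_assoc]
    · rw [Filter.EventuallyLE, ae_restrict_iff' measurableSet_Icc]
      have hdiff := hacl.ae_differentiableAt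
      have hn0 : ∀ᵐ s : ℝ ∂volume, s ≠ 0 := Measure.ae_ne volume 0
      have hnt : ∀ᵐ s : ℝ ∂volume, s ≠ t := Measure.ae_ne volume t
      filter_upwards [hdiff, hspeed, hn0, hnt] with s hs hsp h0 h1 hsI
      have hsO : s ∈ Ioo 0 t := ⟨lt_of_le_of_ne hsI.1 h0.symm, lt_of_le_of_ne hsI.2 h1⟩
      have hd := (hs (by rwa [uIcc_of_le ht])).hasDerivAt
      have hd0 : 0 ≤ deriv ℓ s := by
        have := hmono.derivWithin_nonneg (x := s)
        rwa [derivWithin_of_mem_nhds (Icc_mem_nhds hsO.1 hsO.2)] at this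
      have hd1 : ε * deriv ℓ s ≤ 1 := by
        have := (lt_div_iff₀ hε).1 (hsp hsO.1 _ hd)
        linarith
      obtain ⟨e, hE, he⟩ := dissipation hu hε hlip hmap hanti hsO hd
      obtain ⟨F', hF, hF'⟩ := lyap_decay hu hν hε hε1 hl0 (hmap s hsI).1 (hmap s hsI).2
        (hbc s hsI) (hw s hsI) (hpde s hsO) hd hd0 hd1 hE he
      have hexp : HasDerivAt (fun s => Real.exp (m * s / ε)) (Real.exp (m * s / ε) * (m / ε)) s := by
        have := (((hasDerivAt_id s).const_mul m).div_const ε).exp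
        simpa using this
      have hP := (hexp.fun_mul hF).deriv
      rw [hP]
      have := mul_le_mul_of_nonneg_left hF' (Real.exp_pos (m * s / ε)).le
      calc _ = Real.exp (m * s / ε) * (F' + m / ε * lyap m ε ℓ u s) := by rw [hm]; ring
        _ ≤ _ := this
        _ = _ := by rw [hC1]; ring
  rw [hftc] at hle
  have hI : ∫ τ in (0:ℝ)..t, (deriv ℓ τ + (pt u τ 0) ^ 2 + (px u τ 0) ^ 2 + 1)
            * Real.exp (-(m * (t - τ) / ε))
      = Real.exp (-(m * t / ε)) * ∫ s in (0:ℝ)..t, (deriv ℓ s + (pt u s 0) ^ 2 + (px u s 0) ^ 2 + 1)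
          * Real.exp (m * s / ε) := by
    rw [← intervalIntegral.integral_const_mul]
    congr 1
    funext s
    rw [show -(m * (t - s) / ε) = -(m * t / ε) + m * s / ε by ring, Real.exp_add]
    ring
  rw [hI]
  rw [intervalIntegral.integral_const_mul] at hle
  have h0m : (0:ℝ) ∈ Icc 0 t := ⟨le_rfl, ht⟩
  have htm : t ∈ Icc 0 t := ⟨ht, le_rfl⟩
  have hst := (lyap_sandwich (ε := ε) hu hν (hl0.trans_le (hmap t htm).1) (hmap t htm).2
    (hbc t htm)).1
  have hs0 := (lyap_sandwich (ε := ε) hu hν (hl0.trans_le (hmap 0 h0m).1) (hmap 0 h0m).2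
    (hbc 0 h0m)).2
  simp only [mul_zero, zero_div, Real.exp_zero, one_mul] at hle
  have hp := Real.exp_pos (-(m * t / ε))
  have hpp : Real.exp (-(m * t / ε)) * Real.exp (m * t / ε) = 1 := by
    rw [← Real.exp_add]; simp
  have h1 := mul_le_mul_of_nonneg_left hle hp.le
  have h2 := mul_le_mul_of_nonneg_left hs0 hp.le
  rw [mul_sub, ← mul_assoc, hpp] at h1
  linarith

/-! ### Reduction to globally `C²` displacements -/

/-- A function that is `C²` on an open neighbourhood `U` of a closed set `S` agrees near `S` with a
globally `C²` function. -/
lemma exists_global_extension {u : ℝ → ℝ → ℝ} {U S : Set (ℝ × ℝ)} (hU : IsOpen U)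
    (hS : IsClosed S) (hSU : S ⊆ U) (hu : ContDiffOn ℝ 2 (fun p : ℝ × ℝ => u p.1 p.2) U) :
    ∃ v : ℝ → ℝ → ℝ, ContDiff ℝ 2 (fun p : ℝ × ℝ => v p.1 p.2) ∧
      ∀ p ∈ S, (fun p : ℝ × ℝ => v p.1 p.2) =ᶠ[nhds p] fun p => u p.1 p.2 := by
  obtain ⟨f, h0, h1, -⟩ := exists_contMDiffMap_zero_one_nhds_of_isClosed (n := 2)
    (modelWithCornersSelf ℝ (ℝ × ℝ)) hU.isClosed_compl hS
    (disjoint_compl_left_iff_subset.2 hSU)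
  have hf : ContDiff ℝ 2 f := f.contMDiff.contDiff
  refine ⟨fun t x => f (t, x) * u t x, ?_, fun p hp => ?_⟩
  · rw [contDiff_iff_contDiffAt]
    intro p
    by_cases hp : p ∈ U
    · exact hf.contDiffAt.mul ((hu p hp).contDiffAt (hU.mem_nhds hp))
    · refine (contDiffAt_const (c := (0:ℝ))).congr_of_eventuallyEq ?_
      filter_upwards [h0.filter_mono (nhds_le_nhdsSet (show p ∈ Uᶜ from hp))] with q hq
      simp [hq]
  · filter_upwards [h1.filter_mono (nhds_le_nhdsSet hp)] with q hq
    simp [hq]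

lemma eventuallyEq_pt {u v : ℝ → ℝ → ℝ} {p : ℝ × ℝ}
    (h : (fun p : ℝ × ℝ => v p.1 p.2) =ᶠ[nhds p] fun p => u p.1 p.2) :
    (fun p : ℝ × ℝ => pt v p.1 p.2) =ᶠ[nhds p] fun p => pt u p.1 p.2 := by
  filter_upwards [eventually_eventually_nhds.2 h] with q hq
  have : Filter.Tendsto (fun s : ℝ => (s, q.2)) (nhds q.1) (nhds q) :=
    (Continuous.prodMk continuous_id continuous_const).tendsto' _ _ rfl
  exact Filter.EventuallyEq.deriv_eq (this.eventually hq)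

lemma eventuallyEq_px {u v : ℝ → ℝ → ℝ} {p : ℝ × ℝ}
    (h : (fun p : ℝ × ℝ => v p.1 p.2) =ᶠ[nhds p] fun p => u p.1 p.2) :
    (fun p : ℝ × ℝ => px v p.1 p.2) =ᶠ[nhds p] fun p => px u p.1 p.2 := by
  filter_upwards [eventually_eventually_nhds.2 h] with q hq
  have : Filter.Tendsto (fun s : ℝ => (q.1, s)) (nhds q.2) (nhds q) :=
    (Continuous.prodMk continuous_const continuous_id).tendsto' _ _ rfl
  exact Filter.EventuallyEq.deriv_eq (this.eventually hq)

/-- The closure of the moving domain contains the initial slice and both lateral boundaries. -/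
lemma mem_closure_domain {ℓ : ℝ → ℝ} {l0 t x : ℝ} (hl0 : 0 < l0) (hmono : MonotoneOn ℓ (Ici 0))
    (hl : ∀ t ≥ (0:ℝ), l0 ≤ ℓ t) (ht : 0 ≤ t) (hx : 0 ≤ x) (hxl : x ≤ ℓ t) :
    (t, x) ∈ closure {p : ℝ × ℝ | 0 < p.1 ∧ 0 < p.2 ∧ p.2 < ℓ p.1} := by
  have hc : Continuous fun δ : ℝ => (t + δ, x * (1 - δ) + δ * (l0 / 2)) := by fun_prop
  have hlim : Filter.Tendsto (fun δ : ℝ => (t + δ, x * (1 - δ) + δ * (l0 / 2)))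
      (nhdsWithin 0 (Ioi 0)) (nhds (t, x)) :=
    (hc.tendsto' 0 _ (by simp)).mono_left nhdsWithin_le_nhds
  refine mem_closure_of_tendsto hlim ?_
  filter_upwards [Ioo_mem_nhdsGT (show (0:ℝ) < 1 by norm_num)] with δ hδ
  have h1 := mul_nonneg hx (sub_nonneg.2 hδ.2.le)
  have h2 := mul_pos hδ.1 hl0
  have h3 := mul_le_mul_of_nonneg_right hxl (sub_nonneg.2 hδ.2.le)
  have h4 := mul_le_mul_of_nonneg_left (hl t ht) hδ.1.le
  have h5 : ℓ t ≤ ℓ (t + δ) := hmono ht (show 0 ≤ t + δ by linarith [hδ.1]) (by linarith [hδ.1])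
  refine ⟨?_, ?_, ?_⟩
  · linarith [hδ.1]
  · linarith
  · linarith

/-- Theorem 3.4 of the paper. Exponential decay of the modified energy:
if `ν > 0`, `|w| ≤ M` and `ℓ ≤ L` on `[0,T]`, and the energy-dissipation balance holds,
then with `m = mconst ν L > 0` there is `C > 0`, independent of `ε ∈ (0,1/2)`, such that
`Ẽ(t) ≤ 4Ẽ(0)e^{−mt/ε} + C∫₀ᵗ (ℓ' + ẇ² + u_x(·,0)² + 1)e^{−m(t−τ)/ε}dτ` on `[0,T]`. -/
theorem stmt14
    (l0 ν L M T : ℝ) (hl0 : 0 < l0) (hν : 0 < ν) (hL : l0 ≤ L) (hM : 0 < M)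
    (hT : 0 < T) :
    0 < mconst ν L ∧
    ∃ C > (0:ℝ),
      ∀ ε : ℝ, 0 < ε → ε < 1/2 →
      ∀ ℓ : ℝ → ℝ,
        (∃ K : NNReal, LipschitzOnWith K ℓ (Ici 0)) →
        MonotoneOn ℓ (Ici 0) → ℓ 0 = l0 → (∀ t ≥ (0:ℝ), l0 ≤ ℓ t) →
        (∀ᵐ t ∂volume, t ∈ Ioi (0:ℝ) → ∀ d, HasDerivAt ℓ d t → d < 1/ε) →
      ∀ κ : ℝ → ℝ, ContinuousOn κ (Ici l0) → (∀ x ≥ l0, 0 < κ x) →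
      ∀ u : ℝ → ℝ → ℝ,
        (∃ U : Set (ℝ × ℝ), IsOpen U ∧
          closure {p : ℝ × ℝ | 0 < p.1 ∧ 0 < p.2 ∧ p.2 < ℓ p.1} ⊆ U ∧
          ContDiffOn ℝ 2 (fun p : ℝ × ℝ => u p.1 p.2) U) →
        (∀ t x : ℝ, 0 < t → 0 < x → x < ℓ t →
          ε ^ 2 * ptt u t x - pxx u t x + ν * ε * pt u t x = 0) →
        (∀ t ≥ (0:ℝ), u t (ℓ t) = 0) →
        (∀ t ∈ Icc (0:ℝ) T, |u t 0| ≤ M) →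
        (∀ t ∈ Icc (0:ℝ) T, ℓ t ≤ L) →
        (∀ t ≥ (0:ℝ), En ε ℓ u t + Afr ε ν ℓ u t + (∫ σ in l0..ℓ t, κ σ) + Wk u t
          = En ε ℓ u 0) →
        ∀ t ∈ Icc (0:ℝ) T,
          Emod ε ℓ u t
            ≤ 4 * Emod ε ℓ u 0 * Real.exp (-(mconst ν L * t / ε))
              + C * ∫ τ in (0:ℝ)..t,
                  (deriv ℓ τ + (pt u τ 0) ^ 2 + (px u τ 0) ^ 2 + 1)
                    * Real.exp (-(mconst ν L * (t - τ) / ε)) := by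
  obtain ⟨hm, -⟩ := mconst_facts hν (hl0.trans_le hL)
  have hLp : 0 < L := hl0.trans_le hL
  refine ⟨hm, 5 / 2 * (1 + M ^ 2 / l0 ^ 2 + 4 * mconst ν L * L * (1 + M ^ 2 / l0 ^ 2)),
    by positivity, ?_⟩
  intro ε hε hε2 ℓ hlip hmono hℓ0 hl hspeed κ hκ hκ0 u hU hpde hbc hw hlL hbal t ht
  obtain ⟨K, hlip⟩ := hlip
  obtain ⟨U, hUo, hΩU, huU⟩ := hU
  obtain ⟨v, hv, hvu⟩ := exists_global_extension hUo isClosed_closure hΩU huU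
  have hev : ∀ s ≥ (0:ℝ), ∀ x, 0 ≤ x → x ≤ ℓ s →
      (fun p : ℝ × ℝ => v p.1 p.2) =ᶠ[nhds (s, x)] fun p => u p.1 p.2 :=
    fun s hs x hx hxl => hvu _ (mem_closure_domain hl0 hmono hl hs hx hxl)
  have h0 : ∀ s ≥ (0:ℝ), ∀ x, 0 ≤ x → x ≤ ℓ s → v s x = u s x :=
    fun s hs x hx hxl => (hev s hs x hx hxl).eq_of_nhds
  have h1 : ∀ s ≥ (0:ℝ), ∀ x, 0 ≤ x → x ≤ ℓ s → pt v s x = pt u s x :=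
    fun s hs x hx hxl => (eventuallyEq_pt (hev s hs x hx hxl)).eq_of_nhds
  have h2 : ∀ s ≥ (0:ℝ), ∀ x, 0 ≤ x → x ≤ ℓ s → px v s x = px u s x :=
    fun s hs x hx hxl => (eventuallyEq_px (hev s hs x hx hxl)).eq_of_nhds
  have h3 : ∀ s ≥ (0:ℝ), ∀ x, 0 ≤ x → x ≤ ℓ s → ptt v s x = ptt u s x :=
    fun s hs x hx hxl => (eventuallyEq_pt (eventuallyEq_pt (hev s hs x hx hxl))).eq_of_nhds
  have h4 : ∀ s ≥ (0:ℝ), ∀ x, 0 ≤ x → x ≤ ℓ s → pxx v s x = pxx u s x :=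
    fun s hs x hx hxl => (eventuallyEq_px (eventuallyEq_px (hev s hs x hx hxl))).eq_of_nhds
  have hlp : ∀ s ≥ (0:ℝ), 0 < ℓ s := fun s hs => hl0.trans_le (hl s hs)
  have hEn : ∀ s ≥ (0:ℝ), En ε ℓ v s = En ε ℓ u s := by
    intro s hs
    unfold En
    congr 1
    refine intervalIntegral.integral_congr fun x hx => ?_
    rw [uIcc_of_le (hlp s hs).le] at hx
    simp only [h1 s hs x hx.1 hx.2, h2 s hs x hx.1 hx.2]
  have hEmod : ∀ s ≥ (0:ℝ), Emod ε ℓ v s = Emod ε ℓ u s := by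
    intro s hs
    unfold Emod
    congr 1
    refine intervalIntegral.integral_congr fun x hx => ?_
    rw [uIcc_of_le (hlp s hs).le] at hx
    simp only [h1 s hs x hx.1 hx.2, h2 s hs x hx.1 hx.2, h0 s hs 0 le_rfl (hlp s hs).le]
  have hAfr : ∀ s ≥ (0:ℝ), Afr ε ν ℓ v s = Afr ε ν ℓ u s := by
    intro s hs
    unfold Afr
    congr 1
    refine intervalIntegral.integral_congr fun τ hτ => ?_
    rw [uIcc_of_le hs] at hτ
    refine intervalIntegral.integral_congr fun x hx => ?_
    rw [uIcc_of_le (hlp τ hτ.1).le] at hx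
    simp only [h1 τ hτ.1 x hx.1 hx.2]
  have hWk : ∀ s ≥ (0:ℝ), Wk v s = Wk u s := by
    intro s hs
    unfold Wk
    refine intervalIntegral.integral_congr fun τ hτ => ?_
    rw [uIcc_of_le hs] at hτ
    simp only [h1 τ hτ.1 0 le_rfl (hlp τ hτ.1).le, h2 τ hτ.1 0 le_rfl (hlp τ hτ.1).le]
  -- The fracture energy is nondecreasing in time, so the remaining part of the balance is antitone.
  have hanti : AntitoneOn (fun s => En ε ℓ v s + Afr ε ν ℓ v s + Wk v s) (Icc 0 t) := by
    intro a ha b hb hab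
    simp only
    rw [hEn a ha.1, hAfr a ha.1, hWk a ha.1, hEn b hb.1, hAfr b hb.1, hWk b hb.1]
    have hi : ∀ a ≥ l0, ∀ b ≥ l0, IntervalIntegrable κ volume a b := fun a ha b hb =>
      (hκ.mono fun x hx => (le_inf ha hb).trans hx.1).intervalIntegrable
    have hab' := hmono ha.1 hb.1 hab
    have hadd := intervalIntegral.integral_add_adjacent_intervals
      (hi l0 le_rfl _ (hl a ha.1)) (hi _ (hl a ha.1) _ (hl b hb.1))
    have hpos : 0 ≤ ∫ x in (ℓ a)..ℓ b, κ x :=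
      intervalIntegral.integral_nonneg hab' fun x hx => (hκ0 x ((hl a ha.1).trans hx.1)).le
    linarith [hbal a ha.1, hbal b hb.1]
  have hsub : Icc 0 t ⊆ Ici 0 := Icc_subset_Ici_self
  have hsubT : Icc 0 t ⊆ Icc 0 T := Icc_subset_Icc_right ht.2
  have key := decay_global (u := v) (ν := ν) (l0 := l0) (L := L) (M := M) hv hν hε
    (by linarith) hl0 ht.1 (hlip.mono hsub)
    (fun s hs => ⟨hl s hs.1, hlL s (hsubT hs)⟩) (hmono.mono hsub) hspeed
    (fun s hs x hx hxl => by
      rw [h1 s hs.1.le x hx.le hxl.le, h3 s hs.1.le x hx.le hxl.le, h4 s hs.1.le x hx.le hxl.le]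
      exact hpde s x hs.1 hx hxl)
    (fun s hs => by rw [h0 s hs.1 _ (hlp s hs.1).le le_rfl]; exact hbc s hs.1)
    (fun s hs => by rw [h0 s hs.1 0 le_rfl (hlp s hs.1).le]; exact hw s (hsubT hs))
    hanti
  rw [hEmod t ht.1, hEmod 0 le_rfl] at key
  refine key.trans_eq ?_
  congr 2
  refine intervalIntegral.integral_congr fun τ hτ => ?_
  rw [uIcc_of_le ht.1] at hτ
  simp only [h1 τ hτ.1 0 le_rfl (hlp τ hτ.1).le, h2 τ hτ.1 0 le_rfl (hlp τ hτ.1).le]
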